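/- Let φ = (1+√5)/2, let S = (1/√(φ+2))·[[1, φ], [φ, −1]], and let T = diag(1, e^{4πi/5}). Then the set of monomial unitary 2×2 complex matrices U such that (S T) U (S T)⁻¹ is monomial equals {λ·I : λ ∈ ℂ, |λ| = 1} ∪ {λ·[[0, e^{3πi/5}], [1, 0]] : λ ∈ ℂ, |λ| = 1}. -/

import Mathlib

open scoped Matrix

/-- A square matrix is monomial if every row and every column contains exactly one
nonzero entry. -/
def Matrix.IsMonomial {n : Type*} [Fintype n] (M : Matrix n n ℂ) : Prop :=
  (∀ i, ∃! j, M i j ≠ 0) ∧ (∀ j, ∃! i, M i j ≠ 0)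

/-!
Let `S` be proportional to `!![1, x; x, -1]` and `T = !![1, 0; 0, w]`. Conjugation by `T` fixes
diagonal matrices and sends `!![0, b; c, 0]` to `!![0, b * w⁻¹; w * c, 0]`. Up to a nonzero scalar,
conjugation by `S` sends `!![a, 0; 0, d]` to a matrix with off-diagonal entries `x * (a - d)`, and
`!![0, b; c, 0]` to one with diagonal entries `±x * (b + c)`. These have to vanish, since the
vanishing of the other two entries would force `x ^ 4 = 1`. So `U` is either scalar or proportional
to `!![0, -w ^ 2; 1, 0]`.
-/

section Monomial

variable {n : Type*} [Fintype n]

theorem isMonomial_smul_iff {k : ℂ} (hk : k ≠ 0) (M : Matrix n n ℂ) :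
    (k • M).IsMonomial ↔ M.IsMonomial := by
  simp only [Matrix.IsMonomial, Matrix.smul_apply, smul_ne_zero_iff, ne_eq, hk, not_false_eq_true,
    true_and]

theorem isMonomial_conj_iff_adjugate [DecidableEq n] {A : Matrix n n ℂ} (hA : A.det ≠ 0)
    (M : Matrix n n ℂ) : (A * M * A⁻¹).IsMonomial ↔ (A * M * A.adjugate).IsMonomial := by
  rw [Matrix.inv_def, Ring.inverse_eq_inv', Matrix.mul_smul, isMonomial_smul_iff (inv_ne_zero hA)]

theorem isMonomial_fin_two_iff {a b c d : ℂ} :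
    !![a, b; c, d].IsMonomial ↔
      (a ≠ 0 ∧ d ≠ 0 ∧ b = 0 ∧ c = 0) ∨ (a = 0 ∧ d = 0 ∧ b ≠ 0 ∧ c ≠ 0) := by
  simp only [Matrix.IsMonomial, ExistsUnique, Fin.forall_fin_two, Fin.exists_fin_two,
    Matrix.of_apply, Matrix.cons_val', Matrix.cons_val_zero, Matrix.cons_val_one,
    Matrix.cons_val_fin_one, one_ne_zero, zero_ne_one, implies_true, imp_false, not_not, true_and,
    and_true, ne_eq]
  tauto

end Monomial

section Unitary

variable {𝕜 : Type*} [RCLike 𝕜]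

theorem smul_mem_unitaryGroup_iff {n : Type*} [Fintype n] [DecidableEq n] [Nonempty n]
    {M : Matrix n n 𝕜} (hM : M ∈ Matrix.unitaryGroup n 𝕜) {k : 𝕜} :
    k • M ∈ Matrix.unitaryGroup n 𝕜 ↔ ‖k‖ = 1 := by
  have hkM : k • M * star (k • M) = ((‖k‖ : 𝕜) ^ 2) • (1 : Matrix n n 𝕜) := by
    rw [star_smul, smul_mul_smul_comm, Matrix.mem_unitaryGroup_iff.1 hM, RCLike.star_def,
      RCLike.mul_conj]
  rw [Matrix.mem_unitaryGroup_iff, hkM,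
    (smul_left_injective 𝕜 one_ne_zero).eq_iff' (one_smul 𝕜 _)]
  norm_cast
  exact pow_eq_one_iff_of_nonneg (norm_nonneg k) two_ne_zero

theorem antidiagonal_mem_unitaryGroup {b c : 𝕜} (hb : ‖b‖ = 1) (hc : ‖c‖ = 1) :
    !![0, b; c, 0] ∈ Matrix.unitaryGroup (Fin 2) 𝕜 := by
  rw [Matrix.mem_unitaryGroup_iff, ← Matrix.ext_iff]
  simp [Fin.forall_fin_two, Matrix.mul_apply, Fin.sum_univ_two, RCLike.mul_conj, hb, hc]

end Unitary

section Conjugation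

theorem conj_mul_eq_conj_conj {n R : Type*} [Fintype n] [DecidableEq n] [CommRing R]
    (A B M : Matrix n n R) :
    (A * B) * M * (A * B)⁻¹ = A * (B * M * B⁻¹) * A⁻¹ := by
  simp only [Matrix.mul_inv_rev, Matrix.mul_assoc]

theorem one_add_sq_ne_zero_of_pow_four_ne_one {R : Type*} [CommRing R] {x : R} (hx : x ^ 4 ≠ 1) :
    1 + x ^ 2 ≠ 0 :=
  fun h ↦ hx (by linear_combination (x ^ 2 - 1) * h)

theorem conj_diag_one_eq {K : Type*} [Field K] {T : Matrix (Fin 2) (Fin 2) K} {w : K}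
    (hT : T = !![1, 0; 0, w]) (hw : w ≠ 0) (a b c d : K) :
    T * !![a, b; c, d] * T⁻¹ = !![a, b * w⁻¹; w * c, d] := by
  have hinv : T⁻¹ = !![1, 0; 0, w⁻¹] :=
    Matrix.inv_eq_right_inv (by simp [hT, hw, Matrix.one_fin_two])
  rw [hinv, hT]
  simp [mul_right_comm w d, hw]

variable {S T U : Matrix (Fin 2) (Fin 2) ℂ} {s x w a b c d : ℂ}

theorem isMonomial_conj_S_iff (hS : S = s • !![1, x; x, -1]) (hs : s ≠ 0) (hx : x ^ 4 ≠ 1) :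
    (S * !![a, b; c, d] * S⁻¹).IsMonomial ↔
      !![a + x * (b + c) + x ^ 2 * d, x * (a - d) + x ^ 2 * c - b;
        x * (a - d) + x ^ 2 * b - c, x ^ 2 * a - x * (b + c) + d].IsMonomial := by
  have hdet : S.det = -s ^ 2 * (1 + x ^ 2) := by
    rw [hS, Matrix.det_smul, Matrix.det_fin_two_of, Fintype.card_fin]
    ring
  have hs₂ : -s ^ 2 ≠ 0 := neg_ne_zero.2 (pow_ne_zero 2 hs)
  have hdet₀ : S.det ≠ 0 := hdet ▸ mul_ne_zero hs₂ (one_add_sq_ne_zero_of_pow_four_ne_one hx)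
  have hconj : S * !![a, b; c, d] * S.adjugate =
      (-s ^ 2) • !![a + x * (b + c) + x ^ 2 * d, x * (a - d) + x ^ 2 * c - b;
        x * (a - d) + x ^ 2 * b - c, x ^ 2 * a - x * (b + c) + d] := by
    ext i j
    fin_cases i <;> fin_cases j <;> simp [hS, Matrix.adjugate_fin_two] <;> ring
  rw [isMonomial_conj_iff_adjugate hdet₀, hconj, isMonomial_smul_iff hs₂]

theorem isMonomial_conj_S_diagonal_iff (hS : S = s • !![1, x; x, -1]) (hs : s ≠ 0) (hx₀ : x ≠ 0)
    (hx : x ^ 4 ≠ 1) (ha : a ≠ 0) : (S * !![a, 0; 0, d] * S⁻¹).IsMonomial ↔ a = d := by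
  rw [isMonomial_conj_S_iff hS hs hx, isMonomial_fin_two_iff]
  constructor
  · rintro (⟨-, -, h₀₁, -⟩ | ⟨h₀₀, h₁₁, -, -⟩)
    · exact mul_left_cancel₀ hx₀ (by linear_combination h₀₁)
    · have hxa : (x ^ 4 - 1) * a = 0 := by linear_combination x ^ 2 * h₁₁ - h₀₀
      exact absurd hxa (mul_ne_zero (sub_ne_zero.2 hx) ha)
  · rintro rfl
    have hxa : (1 + x ^ 2) * a ≠ 0 := mul_ne_zero (one_add_sq_ne_zero_of_pow_four_ne_one hx) ha
    exact .inl ⟨by convert hxa using 1; ring, by convert hxa using 1; ring, by ring, by ring⟩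

theorem isMonomial_conj_S_antidiagonal_iff (hS : S = s • !![1, x; x, -1]) (hs : s ≠ 0)
    (hx₀ : x ≠ 0) (hx : x ^ 4 ≠ 1) (hc : c ≠ 0) :
    (S * !![0, b; c, 0] * S⁻¹).IsMonomial ↔ b = -c := by
  rw [isMonomial_conj_S_iff hS hs hx, isMonomial_fin_two_iff]
  constructor
  · rintro (⟨-, -, h₀₁, h₁₀⟩ | ⟨h₀₀, -, -, -⟩)
    · have hxc : (x ^ 4 - 1) * c = 0 := by linear_combination x ^ 2 * h₀₁ + h₁₀
      exact absurd hxc (mul_ne_zero (sub_ne_zero.2 hx) hc)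
    · exact mul_left_cancel₀ hx₀ (by linear_combination h₀₀)
  · rintro rfl
    have hxc : (1 + x ^ 2) * c ≠ 0 := mul_ne_zero (one_add_sq_ne_zero_of_pow_four_ne_one hx) hc
    exact .inr ⟨by ring, by ring, by convert hxc using 1; ring,
      by convert neg_ne_zero.2 hxc using 1; ring⟩

theorem isMonomial_conj_ST_diagonal_iff (hS : S = s • !![1, x; x, -1]) (hT : T = !![1, 0; 0, w])
    (hs : s ≠ 0) (hx₀ : x ≠ 0) (hx : x ^ 4 ≠ 1) (hw : w ≠ 0) (ha : a ≠ 0) :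
    ((S * T) * !![a, 0; 0, d] * (S * T)⁻¹).IsMonomial ↔ a = d := by
  rw [conj_mul_eq_conj_conj, conj_diag_one_eq hT hw, zero_mul, mul_zero,
    isMonomial_conj_S_diagonal_iff hS hs hx₀ hx ha]

theorem isMonomial_conj_ST_antidiagonal_iff (hS : S = s • !![1, x; x, -1])
    (hT : T = !![1, 0; 0, w]) (hs : s ≠ 0) (hx₀ : x ≠ 0) (hx : x ^ 4 ≠ 1) (hw : w ≠ 0)
    (hc : c ≠ 0) : ((S * T) * !![0, b; c, 0] * (S * T)⁻¹).IsMonomial ↔ b = c * -w ^ 2 := by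
  rw [conj_mul_eq_conj_conj, conj_diag_one_eq hT hw,
    isMonomial_conj_S_antidiagonal_iff hS hs hx₀ hx (mul_ne_zero hw hc), ← div_eq_mul_inv,
    div_eq_iff hw]
  ring_nf

theorem isMonomial_and_isMonomial_conj_ST_iff (hS : S = s • !![1, x; x, -1])
    (hT : T = !![1, 0; 0, w]) (hs : s ≠ 0) (hx₀ : x ≠ 0) (hx : x ^ 4 ≠ 1) (hw : w ≠ 0) :
    U.IsMonomial ∧ ((S * T) * U * (S * T)⁻¹).IsMonomial ↔
      ∃ k : ℂ, k ≠ 0 ∧ (U = k • 1 ∨ U = k • !![0, -w ^ 2; 1, 0]) := by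
  have hscalar (k : ℂ) : k • (1 : Matrix (Fin 2) (Fin 2) ℂ) = !![k, 0; 0, k] := by
    simp [Matrix.one_fin_two]
  have hantidiagonal (k : ℂ) : k • !![0, -w ^ 2; 1, 0] = !![0, k * -w ^ 2; k, 0] := by simp
  constructor
  · rintro ⟨hU, hSTU⟩
    obtain ⟨a, b, c, d, rfl⟩ : ∃ a b c d, U = !![a, b; c, d] := ⟨_, _, _, _, Matrix.eta_fin_two U⟩
    rcases isMonomial_fin_two_iff.1 hU with ⟨ha, -, rfl, rfl⟩ | ⟨rfl, rfl, -, hc⟩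
    · rw [isMonomial_conj_ST_diagonal_iff hS hT hs hx₀ hx hw ha] at hSTU
      exact ⟨a, ha, .inl (by rw [hscalar, hSTU])⟩
    · rw [isMonomial_conj_ST_antidiagonal_iff hS hT hs hx₀ hx hw hc] at hSTU
      exact ⟨c, hc, .inr (by rw [hantidiagonal, hSTU])⟩
  · rintro ⟨k, hk, rfl | rfl⟩
    · rw [hscalar, isMonomial_conj_ST_diagonal_iff hS hT hs hx₀ hx hw hk]
      exact ⟨isMonomial_fin_two_iff.2 (.inl ⟨hk, hk, rfl, rfl⟩), rfl⟩
    · rw [hantidiagonal, isMonomial_conj_ST_antidiagonal_iff hS hT hs hx₀ hx hw hk]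
      have hkw : k * -w ^ 2 ≠ 0 := mul_ne_zero hk (neg_ne_zero.2 (pow_ne_zero 2 hw))
      exact ⟨isMonomial_fin_two_iff.2 (.inr ⟨rfl, rfl, hkw, hk⟩), rfl⟩

theorem fibonacci_ST_intertwiners_general (hS : S = s • !![1, x; x, -1])
    (hT : T = !![1, 0; 0, w]) (hs : s ≠ 0) (hx₀ : x ≠ 0) (hx : x ^ 4 ≠ 1) (hw : ‖w‖ = 1) :
    {U : Matrix (Fin 2) (Fin 2) ℂ |
        U ∈ Matrix.unitaryGroup (Fin 2) ℂ ∧ U.IsMonomial ∧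
          ((S * T) * U * (S * T)⁻¹).IsMonomial} =
      {U : Matrix (Fin 2) (Fin 2) ℂ | ∃ lam : ℂ, ‖lam‖ = 1 ∧
        (U = lam • (1 : Matrix (Fin 2) (Fin 2) ℂ) ∨ U = lam • !![0, -w ^ 2; 1, 0])} := by
  have hw₀ : w ≠ 0 := norm_ne_zero_iff.1 (hw ▸ one_ne_zero)
  have hV : !![0, -w ^ 2; 1, 0] ∈ Matrix.unitaryGroup (Fin 2) ℂ :=
    antidiagonal_mem_unitaryGroup (by rw [norm_neg, norm_pow, hw, one_pow]) norm_one
  ext U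
  simp only [Set.mem_ofPred_eq, isMonomial_and_isMonomial_conj_ST_iff hS hT hs hx₀ hx hw₀]
  constructor
  · rintro ⟨hU, k, -, rfl | rfl⟩
    · exact ⟨k, (smul_mem_unitaryGroup_iff (one_mem _)).1 hU, .inl rfl⟩
    · exact ⟨k, (smul_mem_unitaryGroup_iff hV).1 hU, .inr rfl⟩
  · rintro ⟨k, hk, hU⟩
    refine ⟨?_, k, norm_ne_zero_iff.1 (hk ▸ one_ne_zero), hU⟩
    rcases hU with rfl | rfl
    · exact (smul_mem_unitaryGroup_iff (one_mem _)).2 hk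
    · exact (smul_mem_unitaryGroup_iff hV).2 hk

end Conjugation

theorem goldenRatio_pow_four_ne_one : (Real.goldenRatio : ℂ) ^ 4 ≠ 1 :=
  mod_cast (one_lt_pow₀ Real.one_lt_goldenRatio four_ne_zero).ne'

theorem inv_sqrt_goldenRatio_add_two_ne_zero :
    (Real.sqrt (Real.goldenRatio + 2) : ℂ)⁻¹ ≠ 0 :=
  inv_ne_zero (mod_cast (Real.sqrt_pos.2 (add_pos Real.goldenRatio_pos two_pos)).ne')

theorem norm_exp_four_pi_mul_I_div_five : ‖Complex.exp (4 * Real.pi * Complex.I / 5)‖ = 1 := by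
  simp [Complex.norm_exp]

theorem exp_three_pi_mul_I_div_five :
    Complex.exp (3 * Real.pi * Complex.I / 5) = -Complex.exp (4 * Real.pi * Complex.I / 5) ^ 2 := by
  rw [← Complex.exp_nat_mul, ← Complex.exp_sub_pi_mul_I]
  congr 1
  push_cast
  ring

/-- **The intertwiners of the Fibonacci `ST`-move.**
With `φ = (1+√5)/2`, `S = (1/√(φ+2)) [[1, φ], [φ, −1]]` and `T = diag(1, e^{4πi/5})`,
the monomial unitary `2 × 2` matrices `U` such that `(S T) U (S T)⁻¹` is monomial are
exactly the unimodular multiples of the identity and of `[[0, e^{3πi/5}], [1, 0]]`. -/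
theorem fibonacci_ST_intertwiners :
    ∀ (φ : ℝ), φ = (1 + Real.sqrt 5) / 2 →
    ∀ S : Matrix (Fin 2) (Fin 2) ℂ,
      S = ((Real.sqrt (φ + 2) : ℂ))⁻¹ • !![1, (φ : ℂ); (φ : ℂ), -1] →
    ∀ T : Matrix (Fin 2) (Fin 2) ℂ,
      T = !![1, 0; 0, Complex.exp (4 * Real.pi * Complex.I / 5)] →
    {U : Matrix (Fin 2) (Fin 2) ℂ |
        U ∈ Matrix.unitaryGroup (Fin 2) ℂ ∧ U.IsMonomial ∧
          ((S * T) * U * (S * T)⁻¹).IsMonomial} =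
      {U : Matrix (Fin 2) (Fin 2) ℂ | ∃ lam : ℂ, ‖lam‖ = 1 ∧
        (U = lam • (1 : Matrix (Fin 2) (Fin 2) ℂ) ∨
          U = lam • !![0, Complex.exp (3 * Real.pi * Complex.I / 5); 1, 0])} := by
  intro φ hφ S hS T hT
  obtain rfl : φ = Real.goldenRatio := hφ
  rw [exp_three_pi_mul_I_div_five]
  exact fibonacci_ST_intertwiners_general hS hT inv_sqrt_goldenRatio_add_two_ne_zero
    (mod_cast Real.goldenRatio_ne_zero) goldenRatio_pow_four_ne_one norm_exp_four_pi_mul_I_div_five
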